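/- Let W be a finite reflection group with root system Φ, a a generic point, Φ⁺ = {α ∈ Φ : ⟨a,α⟩ > 0}, and Δ a simple system for Φ⁺. Fix α ∈ Δ and let W_{Δ∖{α}} be the subgroup of W generated by {s_β : β ∈ Δ, β ≠ α}. Then for every w ∈ W one has w(a) − a ∈ span_ℝ(Δ) and c_α(w(a) − a) ≤ 0, with equality c_α(w(a) − a) = 0 if and only if w ∈ W_{Δ∖{α}}. -/

import Mathlib

/-!
The dual functional of `α` (`1` on `α`, `0` on the other simple roots) computes the `α`-coordinate
on `span ℝ Δ`, so the claim concerns the value of one linear functional on `w a - a`.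

If `β` is a simple root with `⟪w a, β⟫ < 0`, then `s_β w a = w a + t β` with `t > 0`, which
increases `⟪a, w a⟫`. Hence, choosing a counterexample `w` with `⟪a, w a⟫` maximal, the claim holds
for `s_β w`; passing back to `w` subtracts `t β`, which keeps the coordinate nonpositive and, if
`β = α`, makes it strictly negative. When no such `β` exists, `w⁻¹` sends every simple root to a
positive root, and then `w = 1` (`eq_one_of_pos`).

The latter rests on two classical facts: `W` is generated by the simple reflections
(`le_genSubgroup`), and the exchange property of words in simple reflections (`exchange`), itself
a consequence of the fact that `s_β` permutes the positive roots other than `β`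
(`rootRefl_mem_posSystem`).
-/

open scoped RealInnerProductSpace

variable {V : Type*} [NormedAddCommGroup V] [InnerProductSpace ℝ V]

/-- `s` acts as the orthogonal reflection along the nonzero vector `α`:
`s v = v - 2 (⟪v,α⟫/⟪α,α⟫) α`. -/
def IsReflAlong (s : V ≃ₗᵢ[ℝ] V) (α : V) : Prop :=
  α ≠ 0 ∧ ∀ v : V, s v = v - ((2 * ⟪v, α⟫ / ⟪α, α⟫) • α)

/-- `s` is a reflection. -/
def IsReflection (s : V ≃ₗᵢ[ℝ] V) : Prop :=
  ∃ α : V, IsReflAlong s α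

/-- A reflection group: a subgroup of the group of linear isometries of `V` generated by
the reflections it contains. -/
def IsReflectionGroup (W : Subgroup (V ≃ₗᵢ[ℝ] V)) : Prop :=
  W = Subgroup.closure {s | IsReflection s ∧ s ∈ W}

/-- `a` is a generic point for `W`: it is fixed by no reflection belonging to `W`. -/
def IsGeneric (W : Subgroup (V ≃ₗᵢ[ℝ] V)) (a : V) : Prop :=
  ∀ s ∈ W, IsReflection s → s a ≠ a

/-- The `W`-orbit of the point `a`. -/
def orbitSet (W : Subgroup (V ≃ₗᵢ[ℝ] V)) (a : V) : Set V :=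
  {x | ∃ w ∈ W, x = w a}

/-- The permutahedron `Perm^a(W)`: the convex hull of the `W`-orbit of `a`. -/
noncomputable def permutahedron (W : Subgroup (V ≃ₗᵢ[ℝ] V)) (a : V) : Set V :=
  convexHull ℝ (orbitSet W a)

/-- A root system for `W`. -/
structure IsRootSystem (W : Subgroup (V ≃ₗᵢ[ℝ] V)) (Φ : Set V) : Prop where
  finite : Φ.Finite
  nonempty : Φ.Nonempty
  ne_zero : ∀ α ∈ Φ, α ≠ 0
  gen : W = Subgroup.closure {s | ∃ α ∈ Φ, IsReflAlong s α}
  line : ∀ α ∈ Φ, {β ∈ Φ | ∃ t : ℝ, β = t • α} = {α, -α}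
  stable : ∀ w ∈ W, (⇑w) '' Φ = Φ

/-- The positive system determined by the generic point `a`: roots `α` with `⟪a, α⟫ > 0`. -/
def posSystem (a : V) (Φ : Set V) : Set V :=
  {α ∈ Φ | 0 < ⟪a, α⟫}

/-- `Δ` is a simple system for the positive system `Φp`: `Δ ⊆ Φp` is linearly independent and
every element of `Φp` is a linear combination of `Δ` with nonnegative coefficients. -/
def IsSimpleSystem (Φp Δ : Set V) : Prop :=
  Δ ⊆ Φp ∧ LinearIndependent ℝ ((↑) : Δ → V) ∧
    ∀ β ∈ Φp, ∃ c : V →₀ ℝ, (c.support : Set V) ⊆ Δ ∧ (∀ v : V, 0 ≤ c v) ∧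
      β = c.sum fun v r => r • v

/-- The subgroup generated by the reflections along the vectors of `I`. -/
def genSubgroup (I : Set V) : Subgroup (V ≃ₗᵢ[ℝ] V) :=
  Subgroup.closure {s | ∃ β ∈ I, IsReflAlong s β}

/-! ### Reflections -/

lemma isometry_mul_apply (g h : V ≃ₗᵢ[ℝ] V) (v : V) : (g * h) v = g (h v) := rfl

/-- The reflection along `β`, as a linear isometry; it is the identity when `β = 0`. -/
noncomputable def rootRefl (β : V) : V ≃ₗᵢ[ℝ] V := (ℝ ∙ β)ᗮ.reflection

lemma refl_apply (β v : V) : rootRefl β v = v - ((2 * ⟪v, β⟫ / ⟪β, β⟫) • β) := by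
  unfold rootRefl
  rw [Submodule.reflection_orthogonal_apply, Submodule.reflection_singleton_apply,
    real_inner_comm, real_inner_self_eq_norm_sq, neg_sub, ← Nat.cast_smul_eq_nsmul ℝ, smul_smul,
    mul_div_assoc]
  simp

lemma isReflAlong_refl {β : V} (hβ : β ≠ 0) : IsReflAlong (rootRefl β) β :=
  ⟨hβ, refl_apply β⟩

lemma IsReflAlong.eq_refl {s : V ≃ₗᵢ[ℝ] V} {β : V} (h : IsReflAlong s β) : s = rootRefl β := by
  ext v
  rw [h.2, refl_apply]

lemma refl_refl_apply (β v : V) : rootRefl β (rootRefl β v) = v :=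
  Submodule.reflection_reflection _ v

lemma refl_mul_refl (β : V) : rootRefl β * rootRefl β = 1 := by
  ext v
  exact refl_refl_apply β v

lemma refl_self {β : V} (hβ : β ≠ 0) : rootRefl β β = -β := by
  have h : ⟪β, β⟫ ≠ 0 := inner_self_ne_zero.mpr hβ
  rw [refl_apply, mul_div_assoc, div_self h, mul_one, two_smul]
  abel

lemma refl_neg (β : V) : rootRefl (-β) = rootRefl β := by
  ext v
  simp [refl_apply, neg_div]

/-- Conjugation formula `g s_β = s_{gβ} g`. -/
lemma mul_refl (g : V ≃ₗᵢ[ℝ] V) (β : V) : g * rootRefl β = rootRefl (g β) * g := by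
  ext v
  simp [refl_apply]

lemma refl_mem_genSubgroup {I : Set V} {β : V} (hβ : β ∈ I) (h0 : β ≠ 0) :
    rootRefl β ∈ genSubgroup I :=
  Subgroup.subset_closure ⟨β, hβ, isReflAlong_refl h0⟩

/-! ### Dual functionals of a linearly independent set -/

lemma exists_dual {Δ : Set V} (hli : LinearIndependent ℝ ((↑) : Δ → V)) {α : V} (hα : α ∈ Δ) :
    ∃ f : V →ₗ[ℝ] ℝ, f α = 1 ∧ ∀ β ∈ Δ, β ≠ α → f β = 0 := by
  obtain ⟨f, hf⟩ := LinearMap.exists_extend ((Module.Basis.span hli).coord ⟨α, hα⟩)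
  have key : ∀ β : Δ, f β = (Module.Basis.span hli).coord ⟨α, hα⟩ (Module.Basis.span hli β) := by
    intro β
    rw [← hf, LinearMap.comp_apply, Submodule.subtype_apply, Module.Basis.span_apply]
  refine ⟨f, ?_, fun β hβ hne => ?_⟩
  · rw [key ⟨α, hα⟩]
    rw [Module.Basis.coord_apply, Module.Basis.repr_self, Finsupp.single_eq_same]
  · rw [key ⟨β, hβ⟩]
    rw [Module.Basis.coord_apply, Module.Basis.repr_self]
    exact Finsupp.single_eq_of_ne fun h => hne (congrArg Subtype.val h).symm

/-- The dual functional of `α` reads off the `α`-coordinate. -/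
lemma dual_sum {Δ : Set V} {α : V} {f : V →ₗ[ℝ] ℝ} (h1 : f α = 1)
    (h0 : ∀ β ∈ Δ, β ≠ α → f β = 0) {c : V →₀ ℝ} (hc : (c.support : Set V) ⊆ Δ) :
    f (c.sum fun v r => r • v) = c α := by
  rw [Finsupp.sum, map_sum, Finset.sum_eq_single α]
  · simp [h1]
  · intro b hb hne
    simp [h0 b (hc hb) hne]
  · intro h
    simp [Finsupp.notMem_support_iff.mp h]

/-! ### Roots, positive roots and simple roots -/

section Roots

variable {W : Subgroup (V ≃ₗᵢ[ℝ] V)} {Φ Δ : Set V} {a : V}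

lemma IsRootSystem.refl_mem (hΦ : IsRootSystem W Φ) {β : V} (hβ : β ∈ Φ) : rootRefl β ∈ W := by
  rw [hΦ.gen]
  exact Subgroup.subset_closure ⟨β, hβ, isReflAlong_refl (hΦ.ne_zero β hβ)⟩

lemma IsRootSystem.map_mem (hΦ : IsRootSystem W Φ) {w : V ≃ₗᵢ[ℝ] V} (hw : w ∈ W) {β : V}
    (hβ : β ∈ Φ) : w β ∈ Φ := by
  rw [← hΦ.stable w hw]
  exact ⟨β, hβ, rfl⟩

lemma IsRootSystem.neg_mem (hΦ : IsRootSystem W Φ) {β : V} (hβ : β ∈ Φ) : -β ∈ Φ := by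
  have h := hΦ.map_mem (hΦ.refl_mem hβ) hβ
  rwa [refl_self (hΦ.ne_zero β hβ)] at h

lemma inner_ne_zero_of_generic (hΦ : IsRootSystem W Φ) (ha : IsGeneric W a) {β : V} (hβ : β ∈ Φ) :
    ⟪a, β⟫ ≠ 0 := by
  intro h
  refine ha _ (hΦ.refl_mem hβ) ⟨β, isReflAlong_refl (hΦ.ne_zero β hβ)⟩ ?_
  simp [refl_apply, h]

lemma pos_or_neg (hΦ : IsRootSystem W Φ) (ha : IsGeneric W a) {β : V} (hβ : β ∈ Φ) :
    β ∈ posSystem a Φ ∨ -β ∈ posSystem a Φ := by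
  rcases lt_or_gt_of_ne (inner_ne_zero_of_generic hΦ ha hβ) with h | h
  · right
    exact ⟨hΦ.neg_mem hβ, by rw [inner_neg_right]; linarith⟩
  · exact Or.inl ⟨hβ, h⟩

lemma neg_notMem_posSystem {β : V} (hβ : β ∈ posSystem a Φ) : -β ∉ posSystem a Φ := by
  rintro ⟨-, h⟩
  rw [inner_neg_right] at h
  linarith [hβ.2]

/-- A simple reflection `s_β` permutes the positive roots other than `β`: such a root has a
positive coordinate at some simple root different from `β`, and `s_β` leaves that coordinate
unchanged. -/
lemma rootRefl_mem_posSystem (hΦ : IsRootSystem W Φ) (ha : IsGeneric W a)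
    (hΔ : IsSimpleSystem (posSystem a Φ) Δ) {β γ : V} (hβ : β ∈ Δ) (hγ : γ ∈ posSystem a Φ)
    (hne : γ ≠ β) : rootRefl β γ ∈ posSystem a Φ := by
  obtain ⟨hsub, hli, hspan⟩ := hΔ
  have hβΦ : β ∈ Φ := (hsub hβ).1
  refine (pos_or_neg hΦ ha (hΦ.map_mem (hΦ.refl_mem hβΦ) hγ.1)).resolve_right fun hneg => ?_
  obtain ⟨c, hc, hc0, hceq⟩ := hspan γ hγ
  obtain ⟨v, hvβ, hv⟩ : ∃ v, v ≠ β ∧ v ∈ c.support := by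
    by_contra! hcon
    have hγβ : γ = c β • β := by
      rw [hceq, Finsupp.sum, Finset.sum_eq_single β]
      · intro b hb hb'
        exact absurd hb (hcon b hb')
      · intro h
        simp [Finsupp.notMem_support_iff.mp h]
    have hmem : γ ∈ {δ ∈ Φ | ∃ t : ℝ, δ = t • β} := ⟨hγ.1, c β, hγβ⟩
    rw [hΦ.line β hβΦ] at hmem
    rcases hmem with h | h
    · exact hne h
    · exact neg_notMem_posSystem (hsub hβ) (h ▸ hγ)
  obtain ⟨f, hf1, hf0⟩ := exists_dual hli (hc hv)
  have hfγ : f γ = c v := by rw [hceq]; exact dual_sum hf1 hf0 hc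
  have hpos : 0 < c v := lt_of_le_of_ne (hc0 v) (Finsupp.mem_support_iff.mp hv).symm
  have hfr : f (rootRefl β γ) = c v := by
    rw [refl_apply, map_sub, map_smul, hf0 β hβ hvβ.symm, hfγ]
    simp
  obtain ⟨d, hd, hd0, hdeq⟩ := hspan _ hneg
  have h2 : f (-(rootRefl β γ)) = d v := by rw [hdeq]; exact dual_sum hf1 hf0 hd
  rw [map_neg, hfr] at h2
  linarith [hd0 v]

/-- The reflection along a positive root lies in the group generated by the simple reflections.
A positive root `γ` that is not simple has positive inner product with some simple `β`, and
`s_β γ` is a positive root with smaller inner product with `a`. -/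
lemma refl_mem_genSubgroup_of_pos (hΦ : IsRootSystem W Φ) (ha : IsGeneric W a)
    (hΔ : IsSimpleSystem (posSystem a Φ) Δ) {γ : V} (hγ : γ ∈ posSystem a Φ) :
    rootRefl γ ∈ genSubgroup Δ := by
  by_contra hcon
  have hfin : {γ ∈ posSystem a Φ | rootRefl γ ∉ genSubgroup Δ}.Finite :=
    hΦ.finite.subset fun x hx => hx.1.1
  obtain ⟨δ, ⟨hδ, hδn⟩, hmin⟩ :=
    Set.exists_min_image _ (fun x => ⟪a, x⟫) hfin ⟨γ, hγ, hcon⟩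
  have hδ0 : δ ≠ 0 := hΦ.ne_zero δ hδ.1
  have hδΔ : δ ∉ Δ := fun h => hδn (refl_mem_genSubgroup h hδ0)
  obtain ⟨β, hβ, hβδ⟩ : ∃ β ∈ Δ, 0 < ⟪δ, β⟫ := by
    by_contra! hno
    obtain ⟨c, hc, hc0, hceq⟩ := hΔ.2.2 δ hδ
    have h1 : 0 < ⟪δ, δ⟫ := real_inner_self_pos.mpr hδ0
    have h2 : ⟪δ, δ⟫ = ∑ v ∈ c.support, c v * ⟪δ, v⟫ := by
      conv_lhs => arg 3; rw [hceq]
      simp [Finsupp.sum, inner_sum, inner_smul_right]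
    have h3 : ∑ v ∈ c.support, c v * ⟪δ, v⟫ ≤ 0 :=
      Finset.sum_nonpos fun v hv => mul_nonpos_of_nonneg_of_nonpos (hc0 v) (hno v (hc hv))
    linarith
  have hβp := hΔ.1 hβ
  have hβ0 : β ≠ 0 := hΦ.ne_zero β hβp.1
  have hδ' := rootRefl_mem_posSystem hΦ ha hΔ hβ hδ (fun h => hδΔ (h ▸ hβ))
  have hlt : ⟪a, rootRefl β δ⟫ < ⟪a, δ⟫ := by
    rw [refl_apply, inner_sub_right, inner_smul_right]
    have : 0 < 2 * ⟪δ, β⟫ / ⟪β, β⟫ * ⟪a, β⟫ :=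
      mul_pos (div_pos (by linarith) (real_inner_self_pos.mpr hβ0)) hβp.2
    linarith
  have hmem : rootRefl (rootRefl β δ) ∈ genSubgroup Δ := by
    by_contra h
    exact absurd (hmin _ ⟨hδ', h⟩) (not_le.mpr hlt)
  have hs := refl_mem_genSubgroup hβ hβ0
  apply hδn
  have h := mul_refl (rootRefl β) (rootRefl β δ)
  rw [refl_refl_apply] at h
  have h' : rootRefl δ = rootRefl β * rootRefl (rootRefl β δ) * rootRefl β := by
    rw [h, mul_assoc, refl_mul_refl, mul_one]
  rw [h']
  exact mul_mem (mul_mem hs hmem) hs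

lemma le_genSubgroup (hΦ : IsRootSystem W Φ) (ha : IsGeneric W a)
    (hΔ : IsSimpleSystem (posSystem a Φ) Δ) : W ≤ genSubgroup Δ := by
  rw [hΦ.gen, Subgroup.closure_le]
  rintro s ⟨β, hβ, hs⟩
  rw [hs.eq_refl]
  rcases pos_or_neg hΦ ha hβ with h | h
  · exact refl_mem_genSubgroup_of_pos hΦ ha hΔ h
  · rw [← refl_neg]
    exact refl_mem_genSubgroup_of_pos hΦ ha hΔ h

/-! ### Words in simple reflections -/

/-- The product of the reflections along the vectors of a list. -/
noncomputable def wordProd (L : List V) : V ≃ₗᵢ[ℝ] V := (L.map rootRefl).prod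

lemma exists_word {w : V ≃ₗᵢ[ℝ] V} (hw : w ∈ genSubgroup Δ) :
    ∃ L : List V, (∀ β ∈ L, β ∈ Δ) ∧ wordProd L = w := by
  induction hw using Subgroup.closure_induction with
  | mem s hs =>
    obtain ⟨β, hβ, h⟩ := hs
    exact ⟨[β], by simpa using hβ, by simp [wordProd, h.eq_refl]⟩
  | one => exact ⟨[], by simp, by simp [wordProd]⟩
  | mul x y _ _ hx hy =>
    obtain ⟨L, hL, rfl⟩ := hx
    obtain ⟨M, hM, rfl⟩ := hy
    refine ⟨L ++ M, ?_, by simp [wordProd]⟩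
    intro β hβ
    exact (List.mem_append.mp hβ).elim (hL β) (hM β)
  | inv x _ hx =>
    obtain ⟨L, hL, rfl⟩ := hx
    refine ⟨L.reverse, fun β hβ => hL β (List.mem_reverse.mp hβ), ?_⟩
    have hinv : ∀ β : V, (rootRefl β)⁻¹ = rootRefl β :=
      fun β => inv_eq_of_mul_eq_one_left (refl_mul_refl β)
    simp [wordProd, List.prod_inv_reverse, Function.comp_def, hinv]

/-- Exchange property: if a word in simple reflections sends the simple root `β` to a negative root,
then multiplying by `s_β` on the right has the effect of deleting a letter. -/
lemma exchange (hΦ : IsRootSystem W Φ) (ha : IsGeneric W a)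
    (hΔ : IsSimpleSystem (posSystem a Φ) Δ) {β : V} (hβ : β ∈ Δ) (L : List V)
    (hL : ∀ γ ∈ L, γ ∈ Δ) (hneg : wordProd L β ∉ posSystem a Φ) :
    ∃ M : List V, (∀ γ ∈ M, γ ∈ Δ) ∧ M.length < L.length ∧ wordProd M = wordProd L * rootRefl β := by
  induction L with
  | nil => exact absurd (hΔ.1 hβ) (by simpa [wordProd] using hneg)
  | cons γ T ih =>
    have hT : ∀ δ ∈ T, δ ∈ Δ := fun δ hδ => hL δ (List.mem_cons_of_mem _ hδ)
    have hγ : γ ∈ Δ := hL γ List.mem_cons_self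
    have hcons : ∀ M : List V, wordProd (γ :: M) = rootRefl γ * wordProd M := by simp [wordProd]
    by_cases hpos : wordProd T β ∈ posSystem a Φ
    -- The sign changes at the letter `γ`, so `γ` is the image of `β` and is the letter to delete.
    · have heq : wordProd T β = γ := by
        by_contra hne
        apply hneg
        rw [hcons]
        exact rootRefl_mem_posSystem hΦ ha hΔ hγ hpos hne
      refine ⟨T, hT, by simp, ?_⟩
      rw [hcons, mul_assoc, mul_refl, heq, ← mul_assoc, refl_mul_refl, one_mul]
    · obtain ⟨M, hM, hlen, hprod⟩ := ih hT hpos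
      refine ⟨γ :: M, ?_, by simpa using hlen, by rw [hcons, hcons, hprod, mul_assoc]⟩
      intro δ hδ
      rcases List.mem_cons.mp hδ with rfl | h
      · exact hγ
      · exact hM δ h

lemma wordProd_eq_one (hΦ : IsRootSystem W Φ) (ha : IsGeneric W a)
    (hΔ : IsSimpleSystem (posSystem a Φ) Δ) (n : ℕ) : ∀ L : List V, L.length = n →
    (∀ γ ∈ L, γ ∈ Δ) → (∀ β ∈ Δ, wordProd L β ∈ posSystem a Φ) → wordProd L = 1 := by
  induction n using Nat.strong_induction_on with
  | _ n ih =>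
    intro L hn hL hpos
    rcases L.eq_nil_or_concat' with rfl | ⟨T, β, rfl⟩
    · simp [wordProd]
    · have hβ : β ∈ Δ := hL β (by simp)
      have hT : ∀ γ ∈ T, γ ∈ Δ := fun γ hγ => hL γ (by simp [hγ])
      have hprod : wordProd (T ++ [β]) = wordProd T * rootRefl β := by simp [wordProd]
      have hneg : wordProd T β ∉ posSystem a Φ := by
        intro h
        have h2 := hpos β hβ
        rw [hprod, isometry_mul_apply, refl_self (hΦ.ne_zero β (hΔ.1 hβ).1),
          map_neg] at h2
        exact neg_notMem_posSystem h h2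
      obtain ⟨M, hM, hlen, hMprod⟩ := exchange hΦ ha hΔ hβ T hT hneg
      rw [← hprod] at hMprod
      have hMn : M.length < n := by
        rw [List.length_append] at hn
        omega
      rw [← hMprod] at hpos ⊢
      exact ih _ hMn M rfl hM hpos

/-- An element of `W` preserving positivity of the simple roots is trivial. -/
lemma eq_one_of_pos (hΦ : IsRootSystem W Φ) (ha : IsGeneric W a)
    (hΔ : IsSimpleSystem (posSystem a Φ) Δ) {w : V ≃ₗᵢ[ℝ] V} (hw : w ∈ W)
    (hpos : ∀ β ∈ Δ, w β ∈ posSystem a Φ) : w = 1 := by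
  obtain ⟨L, hL, rfl⟩ := exists_word (le_genSubgroup hΦ ha hΔ hw)
  exact wordProd_eq_one hΦ ha hΔ _ L rfl hL hpos

/-! ### The displacement `w a - a` -/

lemma sub_mem_span_of_mem_genSubgroup {I : Set V} {w : V ≃ₗᵢ[ℝ] V} (hw : w ∈ genSubgroup I)
    (v : V) : w v - v ∈ Submodule.span ℝ I := by
  induction hw using Subgroup.closure_induction generalizing v with
  | mem s hs =>
    obtain ⟨β, hβ, h⟩ := hs
    rw [h.2, sub_sub_cancel_left]
    exact neg_mem (Submodule.smul_mem _ _ (Submodule.subset_span hβ))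
  | one => simp
  | mul x y _ _ hx hy =>
    have h := add_mem (hx (y v)) (hy v)
    rwa [sub_add_sub_cancel] at h
  | inv x _ hx =>
    have h := neg_mem (hx (x⁻¹ v))
    rwa [neg_sub, ← isometry_mul_apply, mul_inv_cancel] at h

/-- The inequality and the harder half of the equality case, in terms of the dual functional `f`
of `α`. -/
lemma dual_nonpos (hWfin : (W : Set (V ≃ₗᵢ[ℝ] V)).Finite) (hΦ : IsRootSystem W Φ)
    (ha : IsGeneric W a) (hΔ : IsSimpleSystem (posSystem a Φ) Δ) {α : V} {f : V →ₗ[ℝ] ℝ}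
    (hf1 : f α = 1) (hf0 : ∀ β ∈ Δ, β ≠ α → f β = 0) {w : V ≃ₗᵢ[ℝ] V} (hw : w ∈ W) :
    f (w a - a) ≤ 0 ∧ (f (w a - a) = 0 → w ∈ genSubgroup (Δ \ {α})) := by
  by_contra hcon
  have hfin : {w ∈ (W : Set (V ≃ₗᵢ[ℝ] V)) | ¬ (f (w a - a) ≤ 0 ∧
      (f (w a - a) = 0 → w ∈ genSubgroup (Δ \ {α})))}.Finite := hWfin.subset fun x hx => hx.1
  obtain ⟨u, ⟨hu, hun⟩, hmax⟩ :=
    Set.exists_max_image _ (fun x : V ≃ₗᵢ[ℝ] V => ⟪a, x a⟫) hfin ⟨w, hw, hcon⟩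
  by_cases hdom : ∃ β ∈ Δ, ⟪u a, β⟫ < 0
  · obtain ⟨β, hβ, hlt⟩ := hdom
    have hβp := hΔ.1 hβ
    have hβ0 : β ≠ 0 := hΦ.ne_zero β hβp.1
    obtain ⟨t, ht, hrt⟩ : ∃ t : ℝ, 0 < t ∧ (rootRefl β * u) a = u a + t • β := by
      refine ⟨-(2 * ⟪u a, β⟫ / ⟪β, β⟫), ?_, ?_⟩
      · exact neg_pos.mpr (div_neg_of_neg_of_pos (by linarith) (real_inner_self_pos.mpr hβ0))
      · rw [isometry_mul_apply, refl_apply, neg_smul, sub_eq_add_neg]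
    have hgt : ⟪a, u a⟫ < ⟪a, (rootRefl β * u) a⟫ := by
      rw [hrt, inner_add_right, inner_smul_right]
      linarith [mul_pos ht hβp.2]
    obtain ⟨h1, h2⟩ : f ((rootRefl β * u) a - a) ≤ 0 ∧
        (f ((rootRefl β * u) a - a) = 0 → rootRefl β * u ∈ genSubgroup (Δ \ {α})) := by
      by_contra h
      exact absurd (hmax _ ⟨mul_mem (hΦ.refl_mem hβp.1) hu, h⟩) (not_le.mpr hgt)
    have hfu : f ((rootRefl β * u) a - a) = f (u a - a) + t * f β := by
      rw [hrt, add_sub_right_comm, map_add, map_smul, smul_eq_mul]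
    apply hun
    by_cases hβα : β = α
    · have hfβ : f β = 1 := by rw [hβα, hf1]
      rw [hfβ] at hfu
      exact ⟨by linarith, fun h => by linarith⟩
    · rw [hf0 β hβ hβα, mul_zero, add_zero] at hfu
      rw [hfu] at h1 h2
      refine ⟨h1, fun h => ?_⟩
      have h3 := mul_mem (refl_mem_genSubgroup (I := Δ \ {α}) ⟨hβ, hβα⟩ hβ0) (h2 h)
      rwa [← mul_assoc, refl_mul_refl, one_mul] at h3
  · push Not at hdom
    have hinv : u⁻¹ = 1 := by
      refine eq_one_of_pos hΦ ha hΔ (inv_mem hu) fun β hβ => ?_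
      have hmem := hΦ.map_mem (inv_mem hu) (hΔ.1 hβ).1
      refine ⟨hmem, lt_of_le_of_ne ?_ (inner_ne_zero_of_generic hΦ ha hmem).symm⟩
      have h := hdom β hβ
      rw [← u.inner_map_map, ← isometry_mul_apply u u⁻¹ β, mul_inv_cancel]
      exact h
    rw [inv_eq_one] at hinv
    apply hun
    rw [hinv]
    exact ⟨by simp, fun _ => one_mem _⟩

end Roots

/-- for every `w ∈ W`, `w(a) - a ∈ span ℝ Δ`, its `α`-coordinate (w.r.t. the
basis `Δ`) is nonpositive, and it vanishes iff `w` lies in the standard parabolic subgroup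
generated by the simple reflections `s_β`, `β ∈ Δ ∖ {α}`. -/
theorem coordinate_nonpos_and_vanishing_iff [FiniteDimensional ℝ V]
    (W : Subgroup (V ≃ₗᵢ[ℝ] V)) (hWfin : (W : Set (V ≃ₗᵢ[ℝ] V)).Finite)
    (Φ : Set V) (hΦ : IsRootSystem W Φ) (a : V) (ha : IsGeneric W a)
    (Δ : Set V) (hΔ : IsSimpleSystem (posSystem a Φ) Δ)
    (α : V) (hα : α ∈ Δ) (w : V ≃ₗᵢ[ℝ] V) (hw : w ∈ W) :
    w a - a ∈ Submodule.span ℝ Δ ∧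
    ∀ c : V →₀ ℝ, (c.support : Set V) ⊆ Δ → w a - a = (c.sum fun v r => r • v) →
      c α ≤ 0 ∧ (c α = 0 ↔ w ∈ genSubgroup (Δ \ {α})) := by
  obtain ⟨f, hf1, hf0⟩ := exists_dual hΔ.2.1 hα
  refine ⟨sub_mem_span_of_mem_genSubgroup (le_genSubgroup hΦ ha hΔ hw) a, fun c hc hceq => ?_⟩
  have hfc : f (w a - a) = c α := by rw [hceq]; exact dual_sum hf1 hf0 hc
  obtain ⟨h1, h2⟩ := dual_nonpos hWfin hΦ ha hΔ hf1 hf0 hw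
  rw [hfc] at h1 h2
  refine ⟨h1, h2, fun h => ?_⟩
  have hker : Submodule.span ℝ (Δ \ {α}) ≤ LinearMap.ker f :=
    Submodule.span_le.mpr fun β hβ => hf0 β hβ.1 hβ.2
  rw [← hfc]
  exact hker (sub_mem_span_of_mem_genSubgroup h a)
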